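/- Fix a real number c with 0 < c < 1 and set ξ∧ = 1/c. Then ψ₂(t,ξ∧) ≥ 0 for all t ∈ [−1,1]; moreover, for every ξ > 0 such that ψ₂(t,ξ) ≥ 0 for all t ∈ [−1,1], one has ξ ≥ 1/c and sup over t ∈ [−1,1] of |ψ₂(t,ξ)| is at least sup over t ∈ [−1,1] of |ψ₂(t,ξ∧)|; i.e., ξ∧ = 1/c induces the optimal outer quadratic G⁰ approximant. -/

import Mathlib

/-- Simplified radial error of the quadratic G⁰ Bézier approximant of the unit circular arc. -/
noncomputable def psi2 (c t ξ : ℝ) : ℝ :=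
  (1/8) * (1 - t^2) * (2*(1 - t^2)*ξ^2 + 4*c*(1 + t^2)*ξ - 8 + 2*c^2*(1 - t^2))

/-- Sup over `t ∈ [−1,1]` of `|f t|`. -/
noncomputable def errSup (f : ℝ → ℝ) : ℝ :=
  sSup ((fun t => |f t|) '' Set.Icc (-1 : ℝ) 1)

/-- `ξ∧ = 1/c` induces the optimal outer quadratic G⁰ approximant. -/
theorem stmt_2 (c : ℝ) (hc0 : 0 < c) (hc1 : c < 1) :
    (∀ t ∈ Set.Icc (-1 : ℝ) 1, 0 ≤ psi2 c t (1/c)) ∧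
    ∀ ξ > (0 : ℝ), (∀ t ∈ Set.Icc (-1 : ℝ) 1, 0 ≤ psi2 c t ξ) →
      1/c ≤ ξ ∧ errSup (fun t => psi2 c t (1/c)) ≤ errSup (fun t => psi2 c t ξ) := by
  have key : ∀ t ξ : ℝ, psi2 c t ξ
      = (1/8) * (1 - t^2) * (8*(c*ξ - 1) + 2*(1 - t^2)*(ξ - c)^2) := by
    intro t ξ
    unfold psi2
    ring
  have hcc : c * (1/c) = 1 := by field_simp
  have hsq : ∀ t ∈ Set.Icc (-1 : ℝ) 1, 0 ≤ 1 - t^2 := by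
    intro t ht
    nlinarith [ht.1, ht.2]
  have h1 : ∀ t ∈ Set.Icc (-1 : ℝ) 1, 0 ≤ psi2 c t (1/c) := by
    intro t ht
    have := hsq t ht
    rw [key, hcc]
    have h2 : 0 ≤ 8 * ((1:ℝ) - 1) + 2*(1 - t^2)*(1/c - c)^2 := by
      have : 0 ≤ 2*(1 - t^2)*(1/c - c)^2 := by positivity
      linarith
    positivity
  refine ⟨h1, ?_⟩
  intro ξ hξ hpos
  have hle : 1/c ≤ ξ := by
    by_contra hlt
    push Not at hlt
    have hd : c * ξ < 1 := by
      have := mul_lt_mul_of_pos_left hlt hc0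
      linarith
    have hcx : 0 < c * ξ := by positivity
    obtain ⟨u, hu⟩ : ∃ u, u = (1 - c*ξ) / ((ξ - c)^2 + 1) := ⟨_, rfl⟩
    have hD : 0 < (ξ - c)^2 + 1 := by positivity
    have hu0 : 0 < u := by rw [hu]; exact div_pos (by linarith) hD
    have hmul : u * ((ξ - c)^2 + 1) = 1 - c*ξ := by rw [hu]; field_simp
    have hprod : 0 ≤ u * (ξ - c)^2 := by positivity
    have hu1 : u ≤ 1 := by nlinarith
    have hs : Real.sqrt (1 - u) ^ 2 = 1 - u := Real.sq_sqrt (by linarith)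
    have hmem : Real.sqrt (1 - u) ∈ Set.Icc (-1 : ℝ) 1 :=
      ⟨by linarith [Real.sqrt_nonneg (1 - u)], Real.sqrt_le_one.mpr (by linarith)⟩
    have h := hpos _ hmem
    rw [key, hs] at h
    have hneg : 8*(c*ξ - 1) + 2*(1 - (1 - u))*(ξ - c)^2 < 0 := by nlinarith
    have := mul_neg_of_pos_of_neg (show 0 < 1/8 * (1 - (1 - u)) by linarith) hneg
    linarith
  refine ⟨hle, ?_⟩
  unfold errSup
  apply csSup_le
  · exact ⟨_, 0, by norm_num, rfl⟩
  · rintro _ ⟨t, ht, rfl⟩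
    have hb : BddAbove ((fun t => |psi2 c t ξ|) '' Set.Icc (-1 : ℝ) 1) := by
      apply isCompact_Icc.bddAbove_image
      apply Continuous.continuousOn
      unfold psi2
      fun_prop
    refine le_trans ?_ (le_csSup hb ⟨t, ht, rfl⟩)
    show |psi2 c t (1/c)| ≤ |psi2 c t ξ|
    rw [abs_of_nonneg (h1 t ht), abs_of_nonneg (hpos t ht)]
    have hk := hsq t ht
    have hc' : c ≤ 1/c := by
      rw [le_div_iff₀ hc0]
      nlinarith
    have hq : (1/c - c)^2 ≤ (ξ - c)^2 := by
      apply pow_le_pow_left₀ <;> linarith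
    rw [key, key]
    gcongr
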